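/- Let p ≥ 1. Suppose that for each index i ∈ {1,…,p} we are given functions fᵢ assigning to every real p×p SPD matrix a vector in ℝ^{p−1} and gᵢ assigning to every real p×p SPD matrix a strictly positive real number. Starting from any SPD matrix Θ₀, define Θᵢ from Θ_{i−1} by replacing the off-diagonal entries of the i-th row and column of Θ_{i−1} with u = fᵢ(Θ_{i−1}) and its i-th diagonal entry with gᵢ(Θ_{i−1}) + uᵀ Mᵢ⁻¹ u, where Mᵢ is Θ_{i−1} with its i-th row and column deleted. Then every iterate Θ₁, …, Θ_p is symmetric positive-definite; in particular, the output Θ_p of one full SpodNet layer is SPD. -/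

import Mathlib

open Matrix

/-- The SpodNet column-row/diagonal update at index `i`: replace the off-diagonal
entries of the `i`-th row and column of `Θ` by `u` (symmetrically), and the
`(i,i)` entry by `v + uᵀ M⁻¹ u`, where `M` is `Θ` with its `i`-th row and column
deleted. All other entries are unchanged. -/
noncomputable def spodUpdate {n : ℕ} (i : Fin (n + 1)) (u : Fin n → ℝ) (v : ℝ)
    (Θ : Matrix (Fin (n + 1)) (Fin (n + 1)) ℝ) :
    Matrix (Fin (n + 1)) (Fin (n + 1)) ℝ :=
  Matrix.of fun j k =>
    if hj : j = i then
      if hk : k = i then v + u ⬝ᵥ (Θ.submatrix i.succAbove i.succAbove)⁻¹ *ᵥ u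
      else u ((finSuccAboveEquiv i).symm ⟨k, hk⟩)
    else
      if hk : k = i then u ((finSuccAboveEquiv i).symm ⟨j, hj⟩)
      else Θ j k

/-!
Listing the index `i` last turns the updated matrix into a block matrix with corner `M` (the matrix
with row and column `i` deleted), border `u` and last diagonal entry `v + uᵀ M⁻¹ u`. That entry is
chosen so that the Schur complement of `M` is exactly `v`; by the LDU decomposition, the updated
matrix is then congruent to `diag(M, v)`.
-/

section Ring

variable {m n R : Type*} [Ring R] [PartialOrder R] [StarRing R]

theorem posDef_submatrix_equiv {M : Matrix n n R} (e : m ≃ n) :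
    (M.submatrix e e).PosDef ↔ M.PosDef :=
  ⟨fun h ↦ by simpa using h.submatrix e.symm.injective, fun h ↦ h.submatrix e.injective⟩

theorem posDef_fromBlocks_zero_iff [AddLeftMono R] [Finite m] [Finite n]
    {A : Matrix m m R} {D : Matrix n n R} :
    (fromBlocks A 0 0 D).PosDef ↔ A.PosDef ∧ D.PosDef := by
  refine ⟨fun h ↦ ⟨h.submatrix Sum.inl_injective, h.submatrix Sum.inr_injective⟩, ?_⟩
  have := Fintype.ofFinite m
  have := Fintype.ofFinite n
  rintro ⟨hA, hD⟩
  have isHermitian_blocks : (fromBlocks A 0 0 D).IsHermitian :=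
    hA.isHermitian.fromBlocks (by simp) hD.isHermitian
  refine .of_dotProduct_mulVec_pos isHermitian_blocks fun z hz ↦ ?_
  obtain ⟨x, y, rfl⟩ : ∃ x y, z = Sum.elim x y := ⟨_, _, (Sum.elim_comp_inl_inr z).symm⟩
  have quadForm_eq : star (Sum.elim x y) ⬝ᵥ (fromBlocks A 0 0 D *ᵥ Sum.elim x y) =
      star x ⬝ᵥ (A *ᵥ x) + star y ⬝ᵥ (D *ᵥ y) := by
    simp [fromBlocks_mulVec, Function.star_sumElim]
  rw [quadForm_eq]
  by_cases hx : x = 0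
  · have hy : y ≠ 0 := by
      rintro rfl
      exact hz (by simp [hx])
    simpa [hx] using hD.dotProduct_mulVec_pos hy
  · exact add_pos_of_pos_of_nonneg (hA.dotProduct_mulVec_pos hx)
      (hD.posSemidef.dotProduct_mulVec_nonneg y)

end Ring

section SchurComplement

variable {m n : Type*} [Fintype m] [DecidableEq m]

theorem posDef_fromBlocks_iff_schurComplement {R : Type*} [CommRing R] [PartialOrder R]
    [StarRing R] [AddLeftMono R] [Finite n] {A : Matrix m m R} (hA : A.IsHermitian)
    [Invertible A] (B : Matrix m n R) (D : Matrix n n R) :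
    (fromBlocks A B Bᴴ D).PosDef ↔ A.PosDef ∧ (D - Bᴴ * A⁻¹ * B).PosDef := by
  classical
  have := Fintype.ofFinite n
  let U : Matrix (m ⊕ n) (m ⊕ n) R := fromBlocks 1 (A⁻¹ * B) 0 1
  have isUnit_U : IsUnit U := by simp [U]
  have ldu : fromBlocks A B Bᴴ D = star U * fromBlocks A 0 0 (D - Bᴴ * A⁻¹ * B) * U := by
    rw [fromBlocks_eq_of_invertible₁₁]
    simp [U, star_eq_conjTranspose, fromBlocks_conjTranspose, hA.inv.eq]
  rw [ldu, isUnit_U.posDef_star_left_conjugate_iff, posDef_fromBlocks_zero_iff]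

theorem posDef_bordered_iff {K : Type*} [Field K] [PartialOrder K] [StarRing K]
    [StarOrderedRing K] {M : Matrix m m K} (hM : M.PosDef) (u : m → K) (v : K) :
    (fromBlocks M (replicateCol Unit u) (replicateRow Unit (star u))
      (diagonal fun _ ↦ v + star u ⬝ᵥ M⁻¹ *ᵥ u)).PosDef ↔ 0 < v := by
  let := hM.isUnit.invertible
  have schur_eq : (diagonal fun _ : Unit ↦ v + star u ⬝ᵥ M⁻¹ *ᵥ u) -
      (replicateCol Unit u)ᴴ * M⁻¹ * replicateCol Unit u = diagonal fun _ ↦ v := by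
    rw [Matrix.mul_assoc, ← replicateCol_mulVec]
    ext
    simp [replicateRow_mul_replicateCol_apply]
  rw [← conjTranspose_replicateCol, posDef_fromBlocks_iff_schurComplement hM.isHermitian, schur_eq,
    posDef_diagonal_iff]
  simp [hM]

end SchurComplement

section Update

variable {n : ℕ} (i : Fin (n + 1))

/-- The reindexing of `Fin (n + 1)` that lists `i` last, after the indices `i.succAbove k`. It puts
the `i`-th row and column of a matrix in bordering position. -/
def finSumUnitEquiv : Fin n ⊕ Unit ≃ Fin (n + 1) :=
  (Equiv.optionEquivSumPUnit (Fin n)).symm.trans (finSuccEquiv' i).symm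

@[simp]
theorem finSumUnitEquiv_inl (k : Fin n) : finSumUnitEquiv i (.inl k) = i.succAbove k := rfl

@[simp]
theorem finSumUnitEquiv_inr (x : Unit) : finSumUnitEquiv i (.inr x) = i := rfl

theorem finSuccAboveEquiv_symm_succAbove (k : Fin n) (hk : i.succAbove k ≠ i) :
    (finSuccAboveEquiv i).symm ⟨i.succAbove k, hk⟩ = k :=
  (finSuccAboveEquiv i).symm_apply_apply k

theorem spodUpdate_submatrix_finSumUnitEquiv (u : Fin n → ℝ) (v : ℝ)
    (Θ : Matrix (Fin (n + 1)) (Fin (n + 1)) ℝ) :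
    (spodUpdate i u v Θ).submatrix (finSumUnitEquiv i) (finSumUnitEquiv i) =
      fromBlocks (Θ.submatrix i.succAbove i.succAbove) (replicateCol Unit u) (replicateRow Unit u)
        (diagonal fun _ ↦ v + u ⬝ᵥ (Θ.submatrix i.succAbove i.succAbove)⁻¹ *ᵥ u) := by
  ext (j | _) (k | _) <;> simp [spodUpdate, Fin.succAbove_ne, finSuccAboveEquiv_symm_succAbove]

variable {i} in
theorem posDef_spodUpdate_iff {Θ : Matrix (Fin (n + 1)) (Fin (n + 1)) ℝ}
    (hM : (Θ.submatrix i.succAbove i.succAbove).PosDef) (u : Fin n → ℝ) (v : ℝ) :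
    (spodUpdate i u v Θ).PosDef ↔ 0 < v := by
  rw [← posDef_submatrix_equiv (finSumUnitEquiv i), spodUpdate_submatrix_finSumUnitEquiv]
  exact posDef_bordered_iff hM u v

end Update

/-- **One full SpodNet layer preserves positive-definiteness.**
Given, for each index `i`, a column-update function `f i` and a diagonal-update
function `g i` which is strictly positive on SPD matrices, the sequence starting
from an SPD matrix `Θ₀` and performing the SpodNet update at index `i` with
`u = f i Θ` and `v = g i Θ` at step `i` consists of SPD matrices only; in
particular the output of the layer (after all `n + 1` updates) is SPD. -/
theorem spodnet_layer_posDef (n : ℕ)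
    (f : Fin (n + 1) → Matrix (Fin (n + 1)) (Fin (n + 1)) ℝ → (Fin n → ℝ))
    (g : Fin (n + 1) → Matrix (Fin (n + 1)) (Fin (n + 1)) ℝ → ℝ)
    (hg : ∀ i Θ, Θ.PosDef → 0 < g i Θ)
    (Θseq : ℕ → Matrix (Fin (n + 1)) (Fin (n + 1)) ℝ)
    (h0 : (Θseq 0).PosDef)
    (hstep : ∀ k (hk : k < n + 1),
      Θseq (k + 1) =
        spodUpdate ⟨k, hk⟩ (f ⟨k, hk⟩ (Θseq k)) (g ⟨k, hk⟩ (Θseq k)) (Θseq k)) :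
    ∀ k ≤ n + 1, (Θseq k).PosDef := by
  intro k
  induction k with
  | zero => exact fun _ ↦ h0
  | succ k ih =>
    intro hk
    have hΘ : (Θseq k).PosDef := ih (by lia)
    have hM := hΘ.submatrix (Fin.succAbove_right_injective (p := ⟨k, hk⟩))
    rw [hstep k hk]
    exact (posDef_spodUpdate_iff hM _ _).2 (hg _ _ hΘ)
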